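/- Let C := n − U be the size of the dominating set produced by Rule 2 on the random unit disk graph G_n. Then there exists a constant K > 0 such that for all sufficiently large n, E(C) ≤ K·n/(log log n)^{3/2}. -/

import Mathlib

open MeasureTheory Real Set
open scoped ENNReal

noncomputable section

/-- The Euclidean plane ℝ². -/
abbrev Plane := EuclideanSpace ℝ (Fin 2)

/-- The square region `Q = [0, ℓ]²`. -/
def square (ℓ : ℝ) : Set Plane := {p | p 0 ∈ Set.Icc 0 ℓ ∧ p 1 ∈ Set.Icc 0 ℓ}

/-- The uniform probability measure on the square `[0, ℓ]²`. -/
def unifSq (ℓ : ℝ) : Measure Plane := (volume (square ℓ))⁻¹ • volume.restrict (square ℓ)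

/-- The joint law of `n` points `V₁, …, V_n` chosen independently and uniformly at random from
the square `[0, ℓ]²`. -/
def gMeasure (n : ℕ) (ℓ : ℝ) : Measure (Fin n → Plane) := Measure.pi fun _ => unifSq ℓ

/-- The (closed) neighborhood `N(i)` of vertex `i` in the unit disk graph on the points
`ω 0, …, ω (n-1)`: the vertex `i` together with all vertices adjacent to it. -/
def nbhd {n : ℕ} (ω : Fin n → Plane) (i : Fin n) : Set (Fin n) :=
  {j | j = i ∨ (j ≠ i ∧ dist (ω i) (ω j) ≤ 1)}

/-- Vertex `i` is pruned by Rule 2: there are `i₁ > i₂ > i` with `i₁, i₂ ∈ N(i)`, `i₁`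
adjacent to `i₂`, and `N(i) ⊆ N(i₁) ∪ N(i₂)`. (Here vertex IDs are ordered as the indices.) -/
def Pruned {n : ℕ} (ω : Fin n → Plane) (i : Fin n) : Prop :=
  ∃ i₁ i₂ : Fin n, i < i₂ ∧ i₂ < i₁ ∧ i₁ ∈ nbhd ω i ∧ i₂ ∈ nbhd ω i ∧
    dist (ω i₁) (ω i₂) ≤ 1 ∧ nbhd ω i ⊆ nbhd ω i₁ ∪ nbhd ω i₂

/-- `U` is the number of vertices pruned by Rule 2. -/
def U (n : ℕ) (ω : Fin n → Plane) : ℕ := Set.ncard {i : Fin n | Pruned ω i}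

section Resampling

variable {ι X : Type*} [Fintype ι] [DecidableEq ι] [MeasurableSpace X]

/-- Replacing one coordinate of an i.i.d. family by an independent copy preserves the joint law. -/
theorem measurePreserving_update (μ : Measure X) [IsProbabilityMeasure μ] (i : ι) :
    MeasurePreserving (fun p : (ι → X) × X => Function.update p.1 i p.2)
      ((Measure.pi fun _ : ι => μ).prod μ) (Measure.pi fun _ : ι => μ) := by
  have hm : Measurable (fun p : (ι → X) × X => Function.update p.1 i p.2) := by
    refine measurable_pi_lambda _ fun j => ?_
    by_cases h : j = i
    · subst h; simpa using measurable_snd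
    · simp only [Function.update_of_ne h]
      exact (measurable_pi_apply j).comp measurable_fst
  refine ⟨hm, (Measure.pi_eq fun s hs => ?_).symm⟩
  rw [Measure.map_apply hm (MeasurableSet.univ_pi hs)]
  have : (fun p : (ι → X) × X => Function.update p.1 i p.2) ⁻¹' (Set.univ.pi s)
      = (Set.univ.pi (Function.update s i Set.univ)) ×ˢ s i := by
    ext p
    simp only [Set.mem_preimage, Set.mem_univ_pi, Set.mem_prod]
    constructor
    · intro h
      refine ⟨fun j => ?_, by simpa using h i⟩
      by_cases hj : j = i
      · subst hj; simp
      · simpa [Function.update_of_ne hj] using h j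
    · rintro ⟨h, hi⟩ j
      by_cases hj : j = i
      · subst hj; simpa using hi
      · simpa [Function.update_of_ne hj] using h j
  rw [this, Measure.prod_prod, Measure.pi_pi, ← Finset.mul_prod_erase _ _ (Finset.mem_univ i),
    ← Finset.mul_prod_erase Finset.univ (fun j => μ (s j)) (Finset.mem_univ i)]
  simp only [Function.update_self, measure_univ, one_mul]
  rw [mul_comm]
  congr 1
  refine Finset.prod_congr rfl fun j hj => ?_
  rw [Function.update_of_ne (Finset.ne_of_mem_erase hj)]

variable {μ : Measure X} [IsProbabilityMeasure μ]

theorem measure_pi_eq_lintegral_update (i : ι) {S : Set (ι → X)} (hS : MeasurableSet S) :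
    Measure.pi (fun _ : ι => μ) S
      = ∫⁻ ω, μ {v | Function.update ω i v ∈ S} ∂(Measure.pi fun _ : ι => μ) := by
  have h := measurePreserving_update μ i
  rw [← h.measure_preimage hS.nullMeasurableSet, Measure.prod_apply (h.measurable hS)]
  rfl

theorem measure_pi_eq_lintegral_update_symm (i : ι) {S : Set (ι → X)} (hS : MeasurableSet S) :
    Measure.pi (fun _ : ι => μ) S
      = ∫⁻ v, Measure.pi (fun _ : ι => μ) {ω | Function.update ω i v ∈ S} ∂μ := by
  have h := measurePreserving_update μ i
  rw [← h.measure_preimage hS.nullMeasurableSet, Measure.prod_apply_symm (h.measurable hS)]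
  rfl

/-- If every section of `S` in the coordinate `i` has measure at most `r`, so has `S`. -/
theorem measure_pi_le_of_section_le (i : ι) {S : Set (ι → X)} (hS : MeasurableSet S) {r : ℝ≥0∞}
    (h : ∀ ω, μ {v | Function.update ω i v ∈ S} ≤ r) : Measure.pi (fun _ : ι => μ) S ≤ r := by
  rw [measure_pi_eq_lintegral_update i hS]
  exact (lintegral_mono h).trans (by simp)

/-- Conditioning on the coordinate `i`, discarding an exceptional set `T` of its values. -/
theorem measure_pi_le_add_of_fiber_le (i : ι) {S : Set (ι → X)} (hS : MeasurableSet S)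
    {T : Set X} (hT : MeasurableSet T) {r : ℝ≥0∞}
    (h : ∀ x ∉ T, Measure.pi (fun _ : ι => μ) {ω | Function.update ω i x ∈ S} ≤ r) :
    Measure.pi (fun _ : ι => μ) S ≤ μ T + r := by
  rw [measure_pi_eq_lintegral_update_symm i hS]
  calc _ ≤ ∫⁻ v, (T.indicator 1 v + r) ∂μ := by
        refine lintegral_mono fun v => ?_
        by_cases hv : v ∈ T
        · simpa [hv] using prob_le_one.trans le_self_add
        · simpa [hv] using h v hv
    _ = μ T + r := by
        rw [lintegral_add_right _ measurable_const, lintegral_indicator_one hT]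
        simp

end Resampling

section FirstGoodPair

variable {ι X : Type*} [Fintype ι] [DecidableEq ι] [MeasurableSpace X]
  {μ : Measure X} [IsProbabilityMeasure μ]

/-- If `G`-related pairs `(y, z)` have exceptional sets `R y z` of measure at most `ρ`, then it is
unlikely that `G`-related sample pairs exist but all have their exceptional set hit by another
sample point. -/
theorem measure_forall_pairs_hit_le (A B : Finset ι) {G : X → X → Prop} {R : X → X → X → Prop}
    (hG : MeasurableSet {p : X × X | G p.1 p.2})
    (hR : MeasurableSet {p : X × X × X | R p.1 p.2.1 p.2.2}) {ρ : ℝ≥0∞}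
    (hρ : ∀ y z, G y z → μ {w | R y z w} ≤ ρ) :
    Measure.pi (fun _ : ι => μ) {ω | (∃ a ∈ A, ∃ b ∈ B, G (ω a) (ω b)) ∧
      ∀ a ∈ A, ∀ b ∈ B, G (ω a) (ω b) → ∃ k, k ≠ a ∧ k ≠ b ∧ R (ω a) (ω b) (ω k)}
      ≤ Fintype.card ι * ρ := by
  classical
  let e : ι × ι ≃ Fin (Fintype.card (ι × ι)) := Fintype.equivFin _
  let first (k : ι) (ω : ι → X) (p : ι × ι) : Prop :=
    ∀ q : ι × ι, q.1 ∈ A → q.2 ∈ B → q.1 ≠ k → q.2 ≠ k → G (ω q.1) (ω q.2) → e p ≤ e q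
  let S (k : ι) : Set (ι → X) := {ω | ∃ p : ι × ι, p.1 ∈ A ∧ p.2 ∈ B ∧ p.1 ≠ k ∧ p.2 ≠ k ∧
    G (ω p.1) (ω p.2) ∧ first k ω p ∧ R (ω p.1) (ω p.2) (ω k)}
  have hGm : ∀ q : ι × ι, Measurable fun ω : ι → X => G (ω q.1) (ω q.2) := fun q => by
    have h := hG.preimage ((measurable_pi_apply (X := fun _ : ι => X) q.1).prodMk
      (measurable_pi_apply q.2))
    exact measurableSet_setOfPred.1 h
  have hSm : ∀ k, MeasurableSet (S k) := by
    intro k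
    have hRm : ∀ q : ι × ι, Measurable fun ω : ι → X => R (ω q.1) (ω q.2) (ω k) := fun q => by
      have h := hR.preimage ((measurable_pi_apply (X := fun _ : ι => X) q.1).prodMk
        ((measurable_pi_apply q.2).prodMk (measurable_pi_apply k)))
      exact measurableSet_setOfPred.1 h
    refine measurableSet_setOfPred.2 (Measurable.exists fun p => ?_)
    refine measurable_const.and <| measurable_const.and <| measurable_const.and <|
      measurable_const.and <| (hGm p).and <| Measurable.and ?_ (hRm p)
    exact Measurable.forall fun q => measurable_const.imp <| measurable_const.imp <|
      measurable_const.imp <| measurable_const.imp <| (hGm q).imp measurable_const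
  have hS : ∀ k, Measure.pi (fun _ : ι => μ) (S k) ≤ ρ := by
    intro k
    refine measure_pi_le_of_section_le k (hSm k) fun ω => ?_
    by_cases hex : ∃ p : ι × ι, p.1 ∈ A ∧ p.2 ∈ B ∧ p.1 ≠ k ∧ p.2 ≠ k ∧
        G (ω p.1) (ω p.2) ∧ first k ω p
    · obtain ⟨p, hpA, hpB, hp1, hp2, hpG, hpf⟩ := hex
      refine (measure_mono ?_).trans (hρ _ _ hpG)
      rintro v ⟨q, hqA, hqB, hq1, hq2, hqG, hqf, hqR⟩
      simp only [Function.update_of_ne hq1, Function.update_of_ne hq2,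
        Function.update_self] at hqG hqR
      have hqp : q = p := by
        refine e.injective (le_antisymm (hqf p hpA hpB hp1 hp2 ?_) (hpf q hqA hqB hq1 hq2 hqG))
        simpa only [Function.update_of_ne hp1, Function.update_of_ne hp2] using hpG
      rw [hqp] at hqR
      exact hqR
    · have : {v | Function.update ω k v ∈ S k} = ∅ := by
        refine Set.eq_empty_of_forall_notMem ?_
        rintro v ⟨q, hqA, hqB, hq1, hq2, hqG, hqf, -⟩
        refine hex ⟨q, hqA, hqB, hq1, hq2, ?_, fun r hrA hrB hr1 hr2 hrG => ?_⟩
        · simpa only [Function.update_of_ne hq1, Function.update_of_ne hq2] using hqG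
        · refine hqf r hrA hrB hr1 hr2 ?_
          simpa only [Function.update_of_ne hr1, Function.update_of_ne hr2] using hrG
      rw [this]
      simp
  refine (measure_mono (t := ⋃ k, S k) ?_).trans ?_
  · rintro ω ⟨⟨a, ha, b, hb, hab⟩, hall⟩
    obtain ⟨p, ⟨hpA, hpB, hpG⟩, hpmin⟩ := Set.exists_min_image
      {p : ι × ι | p.1 ∈ A ∧ p.2 ∈ B ∧ G (ω p.1) (ω p.2)} e (Set.toFinite _)
      ⟨(a, b), ha, hb, hab⟩
    obtain ⟨k, hk1, hk2, hkR⟩ := hall _ hpA _ hpB hpG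
    exact Set.mem_iUnion.2 ⟨k, p, hpA, hpB, hk1.symm, hk2.symm, hpG,
      fun q hqA hqB _ _ hqG => hpmin q ⟨hqA, hqB, hqG⟩, hkR⟩
  · refine (measure_iUnion_fintype_le _ _).trans ((Finset.sum_le_sum fun k _ => hS k).trans ?_)
    simp

end FirstGoodPair

section SecondMoment

open ProbabilityTheory

variable {ι X : Type*} [Fintype ι] [DecidableEq ι] [MeasurableSpace X]
  {μ : Measure X} [IsProbabilityMeasure μ]

/-- The event that the two sample points with indices in `p` are `G`-related. -/
def pairEvent (G : X → X → Prop) (p : ι × ι) : Set (ι → X) := {ω | G (ω p.1) (ω p.2)}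

theorem measurableSet_pairEvent {ι X : Type*} [MeasurableSpace X] {G : X → X → Prop}
    (hG : MeasurableSet {p : X × X | G p.1 p.2}) (p : ι × ι) : MeasurableSet (pairEvent G p) := by
  have h := hG.preimage ((measurable_pi_apply (X := fun _ : ι => X) p.1).prodMk
    (measurable_pi_apply p.2))
  exact h

/-- Resampling both coordinates of a pair not involved in the event `S`. -/
theorem measure_inter_pairEvent {G : X → X → Prop} (hG : MeasurableSet {p : X × X | G p.1 p.2})
    {p : ι × ι} (hp : p.1 ≠ p.2) {S : Set (ι → X)} (hS : MeasurableSet S)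
    (h1 : ∀ ω v, Function.update ω p.1 v ∈ S ↔ ω ∈ S)
    (h2 : ∀ ω v, Function.update ω p.2 v ∈ S ↔ ω ∈ S) :
    Measure.pi (fun _ : ι => μ) (S ∩ pairEvent G p)
      = Measure.pi (fun _ : ι => μ) S * ∫⁻ y, μ {z | G y z} ∂μ := by
  have hmeas := measurableSet_pairEvent (ι := ι) hG p
  have hsec : Measurable fun y => μ {z | G y z} := measurable_measure_prodMk_left hG
  rw [measure_pi_eq_lintegral_update_symm p.1 (hS.inter hmeas), ← lintegral_const_mul _ hsec]
  refine lintegral_congr fun y => ?_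
  have hGy : MeasurableSet {z | G y z} := measurable_prodMk_left hG
  have hset : {ω : ι → X | Function.update ω p.1 y ∈ S ∩ pairEvent G p}
      = S ∩ {ω | ω p.2 ∈ {z | G y z}} := by
    ext ω
    simp [pairEvent, h1, Function.update_of_ne hp.symm]
  have hm : MeasurableSet {ω : ι → X | ω p.2 ∈ {z | G y z}} := (measurable_pi_apply p.2) hGy
  rw [hset, measure_pi_eq_lintegral_update p.2 (hS.inter hm)]
  have : ∀ ω : ι → X, μ {v | Function.update ω p.2 v ∈ S ∩ {ω | ω p.2 ∈ {z | G y z}}}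
      = S.indicator (fun _ => μ {z | G y z}) ω := by
    intro ω
    by_cases hω : ω ∈ S <;> simp [h2, hω]
  simp_rw [this]
  rw [lintegral_indicator_const hS, mul_comm]

/-- Resampling one coordinate of a pair, when it is not involved in the event `S`. -/
theorem measure_inter_pairEvent_le_right {G : X → X → Prop}
    (hG : MeasurableSet {p : X × X | G p.1 p.2}) {p : ι × ι} (hp : p.1 ≠ p.2)
    {S : Set (ι → X)} (hS : MeasurableSet S)
    (h2 : ∀ ω v, Function.update ω p.2 v ∈ S ↔ ω ∈ S) {τ : ℝ≥0∞} (hτ : ∀ y, μ {z | G y z} ≤ τ) :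
    Measure.pi (fun _ : ι => μ) (S ∩ pairEvent G p) ≤ Measure.pi (fun _ : ι => μ) S * τ := by
  rw [measure_pi_eq_lintegral_update p.2 (hS.inter (measurableSet_pairEvent hG p)), mul_comm,
    ← lintegral_indicator_const hS]
  refine lintegral_mono fun ω => ?_
  by_cases hω : ω ∈ S
  · simpa [h2, hω, pairEvent, Function.update_of_ne hp] using hτ (ω p.1)
  · simp [h2, hω]

theorem measure_inter_pairEvent_le_left {G : X → X → Prop}
    (hG : MeasurableSet {p : X × X | G p.1 p.2}) {p : ι × ι} (hp : p.1 ≠ p.2)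
    {S : Set (ι → X)} (hS : MeasurableSet S)
    (h1 : ∀ ω v, Function.update ω p.1 v ∈ S ↔ ω ∈ S) {τ : ℝ≥0∞} (hτ : ∀ z, μ {y | G y z} ≤ τ) :
    Measure.pi (fun _ : ι => μ) (S ∩ pairEvent G p) ≤ Measure.pi (fun _ : ι => μ) S * τ :=
  measure_inter_pairEvent_le_right (G := fun y z => G z y) (p := p.swap)
    (measurable_swap hG) hp.symm hS h1 hτ

theorem measure_pairEvent {G : X → X → Prop} (hG : MeasurableSet {p : X × X | G p.1 p.2})
    {p : ι × ι} (hp : p.1 ≠ p.2) :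
    Measure.pi (fun _ : ι => μ) (pairEvent G p) = ∫⁻ y, μ {z | G y z} ∂μ := by
  simpa using measure_inter_pairEvent (μ := μ) hG hp MeasurableSet.univ (by simp) (by simp)

theorem update_mem_pairEvent {ι X : Type*} [DecidableEq ι] {G : X → X → Prop} {p : ι × ι} {i : ι} (h1 : p.1 ≠ i)
    (h2 : p.2 ≠ i) (ω : ι → X) (v : X) :
    Function.update ω i v ∈ pairEvent G p ↔ ω ∈ pairEvent G p := by
  simp [pairEvent, Function.update_of_ne h1, Function.update_of_ne h2]

/-- Second moment bound for the absence of a `G`-related pair in `A × B`. -/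
theorem measure_forall_not_pair_le {A B : Finset ι} (hAB : Disjoint A B) {M : ℕ}
    (hA : A.card = M) (hB : B.card = M) (hM : 0 < M) {G : X → X → Prop}
    (hG : MeasurableSet {p : X × X | G p.1 p.2}) {τ θ : ℝ} (hτ0 : 0 ≤ τ) (hθ : 0 < θ)
    (hτr : ∀ y, μ {z | G y z} ≤ ENNReal.ofReal τ) (hτl : ∀ z, μ {y | G y z} ≤ ENNReal.ofReal τ)
    (hθG : ∫⁻ y, μ {z | G y z} ∂μ = ENNReal.ofReal θ) :
    Measure.pi (fun _ : ι => μ) {ω | ∀ a ∈ A, ∀ b ∈ B, ¬ G (ω a) (ω b)}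
      ≤ ENNReal.ofReal (1 / (M ^ 2 * θ) + 2 * τ / (M * θ)) := by
  classical
  set P := Measure.pi (fun _ : ι => μ) with hP
  have hne : ∀ p ∈ A ×ˢ B, p.1 ≠ p.2 := fun p hp h =>
    Finset.disjoint_left.1 hAB (Finset.mem_product.1 hp).1 (h ▸ (Finset.mem_product.1 hp).2)
  have hcross : ∀ p ∈ A ×ˢ B, ∀ q ∈ A ×ˢ B, p.1 ≠ q.2 := fun p hp q hq h =>
    Finset.disjoint_left.1 hAB (Finset.mem_product.1 hp).1 (h ▸ (Finset.mem_product.1 hq).2)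
  have hme : ∀ p : ι × ι, MeasurableSet (pairEvent G p) := measurableSet_pairEvent hG
  have hPp : ∀ p ∈ A ×ˢ B, P (pairEvent G p) = ENNReal.ofReal θ := fun p hp => by
    rw [hP, measure_pairEvent hG (hne p hp), hθG]
  have hPpq : ∀ p ∈ A ×ˢ B, ∀ q ∈ A ×ˢ B, P.real (pairEvent G p ∩ pairEvent G q) ≤
      θ ^ 2 + ((if p.1 = q.1 then θ * τ else 0) + ((if p.2 = q.2 then θ * τ else 0) +
        (if p = q then θ else 0))) := by
    intro p hp q hq
    have key : ∀ r, 0 ≤ r → P (pairEvent G p ∩ pairEvent G q) ≤ ENNReal.ofReal r →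
        P.real (pairEvent G p ∩ pairEvent G q) ≤ r := fun r hr h =>
      ENNReal.toReal_le_of_le_ofReal hr h
    have ht : 0 ≤ θ * τ := by positivity
    by_cases h1 : p.1 = q.1
    · by_cases h2 : p.2 = q.2
      · have hpq : p = q := Prod.ext h1 h2
        have := key θ hθ.le (by rw [← hpq, Set.inter_self, hPp p hp])
        rw [if_pos h1, if_pos h2, if_pos hpq]
        nlinarith [sq_nonneg θ]
      · have hpq : p ≠ q := fun h => h2 (by rw [h])
        have := key (θ * τ) ht (by
          rw [ENNReal.ofReal_mul hθ.le, ← hPp p hp]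
          exact measure_inter_pairEvent_le_right hG (hne q hq) (hme p)
            (update_mem_pairEvent (hcross p hp q hq) h2) hτr)
        rw [if_pos h1, if_neg h2, if_neg hpq]
        nlinarith [sq_nonneg θ]
    · have hpq : p ≠ q := fun h => h1 (by rw [h])
      by_cases h2 : p.2 = q.2
      · have := key (θ * τ) ht (by
          rw [ENNReal.ofReal_mul hθ.le, ← hPp p hp]
          exact measure_inter_pairEvent_le_left hG (hne q hq) (hme p)
            (update_mem_pairEvent h1 (hcross q hq p hp).symm) hτl)
        rw [if_neg h1, if_pos h2, if_neg hpq]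
        nlinarith [sq_nonneg θ]
      · have := key (θ * θ) (by positivity) (by
          rw [ENNReal.ofReal_mul hθ.le]
          nth_rewrite 1 [← hPp p hp]
          rw [← hθG]
          exact (measure_inter_pairEvent hG (hne q hq) (hme p)
            (update_mem_pairEvent h1 (hcross q hq p hp).symm)
            (update_mem_pairEvent (hcross p hp q hq) h2)).le)
        rw [if_neg h1, if_neg h2, if_neg hpq]
        nlinarith
  let N : (ι → X) → ℝ := fun ω => ∑ p ∈ A ×ˢ B, (pairEvent G p).indicator (fun _ => (1 : ℝ)) ω
  have hN : MemLp N 2 P := memLp_finsetSum _ fun p _ =>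
    memLp_indicator_const _ (hme p) _ (Or.inr (measure_ne_top _ _))
  have hEN : ∫ ω, N ω ∂P = M ^ 2 * θ := by
    rw [integral_finsetSum _ fun p _ => (integrable_const (1 : ℝ)).indicator (hme p)]
    calc _ = ∑ p ∈ A ×ˢ B, θ := by
          refine Finset.sum_congr rfl fun p hp => ?_
          rw [integral_indicator_const _ (hme p), measureReal_def, hPp p hp]
          simp [ENNReal.toReal_ofReal hθ.le]
      _ = _ := by
          rw [Finset.sum_const, Finset.card_product, hA, hB, nsmul_eq_mul]
          push_cast; ring
  have hEN2 : ∫ ω, (N ^ 2) ω ∂P ≤ M ^ 4 * θ ^ 2 + 2 * M ^ 3 * (θ * τ) + M ^ 2 * θ := by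
    have hsq : ∀ ω, (N ^ 2) ω = ∑ p ∈ A ×ˢ B, ∑ q ∈ A ×ˢ B,
        (pairEvent G p ∩ pairEvent G q).indicator (fun _ => (1 : ℝ)) ω := by
      intro ω
      simp only [N, Pi.pow_apply, sq, Finset.sum_mul_sum]
      refine Finset.sum_congr rfl fun p _ => Finset.sum_congr rfl fun q _ => ?_
      by_cases h1 : ω ∈ pairEvent G p <;> by_cases h2 : ω ∈ pairEvent G q <;> simp [h1, h2]
    simp_rw [hsq]
    have hintegrable : ∀ p q : ι × ι, Integrable
        ((pairEvent G p ∩ pairEvent G q).indicator (fun _ => (1 : ℝ))) P := fun p q =>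
      (integrable_const (1 : ℝ)).indicator ((hme p).inter (hme q))
    rw [integral_finsetSum _ fun p _ => integrable_finsetSum _ fun q _ => hintegrable p q]
    simp_rw [integral_finsetSum _ fun q _ => hintegrable _ q,
      integral_indicator_const _ ((hme _).inter (hme _)), smul_eq_mul, mul_one]
    refine (Finset.sum_le_sum fun p hp => Finset.sum_le_sum fun q hq => hPpq p hp q hq).trans ?_
    calc _ = ∑ p ∈ A ×ˢ B, ((M : ℝ) ^ 2 * θ ^ 2 + (M * (θ * τ) + (M * (θ * τ) + θ))) := by
          refine Finset.sum_congr rfl fun p hp => ?_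
          obtain ⟨hpA, hpB⟩ := Finset.mem_product.1 hp
          simp only [Finset.sum_add_distrib]
          congr 1
          · rw [Finset.sum_const, Finset.card_product, hA, hB, nsmul_eq_mul]
            push_cast; ring
          congr 1
          · rw [Finset.sum_product]
            calc _ = ∑ a ∈ A, if p.1 = a then (M : ℝ) * (θ * τ) else 0 :=
                  Finset.sum_congr rfl fun a _ => by split_ifs <;> simp [hB]
              _ = _ := by rw [Finset.sum_ite_eq, if_pos hpA]
          congr 1
          · rw [Finset.sum_product_right]
            calc _ = ∑ b ∈ B, if p.2 = b then (M : ℝ) * (θ * τ) else 0 :=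
                  Finset.sum_congr rfl fun b _ => by split_ifs <;> simp [hA]
              _ = _ := by rw [Finset.sum_ite_eq, if_pos hpB]
          · simp [Finset.sum_ite_eq, hpA, hpB]
      _ ≤ _ := by
          rw [Finset.sum_const, Finset.card_product, hA, hB, nsmul_eq_mul]
          push_cast
          apply le_of_eq; ring
  have hMpos : (0 : ℝ) < M := by exact_mod_cast hM
  have hc : (0 : ℝ) < M ^ 2 * θ := by positivity
  have hcheb := meas_ge_le_variance_div_sq hN hc
  refine (measure_mono ?_).trans (hcheb.trans (ENNReal.ofReal_le_ofReal ?_))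
  · intro ω hω
    have h0 : N ω = 0 := Finset.sum_eq_zero fun p hp => by
      obtain ⟨hpA, hpB⟩ := Finset.mem_product.1 hp
      exact Set.indicator_of_notMem (s := pairEvent G p) (hω _ hpA _ hpB) _
    simp only [Set.mem_ofPred_eq, h0, hEN, zero_sub, abs_neg]
    exact le_abs_self _
  · rw [variance_eq_sub hN, hEN, div_le_iff₀ (by positivity)]
    refine (sub_le_sub_right hEN2 _).trans (le_of_eq ?_)
    field_simp
    ring

end SecondMoment

theorem volume_coordinate_box (a b c d : ℝ) :
    volume {w : Plane | w 0 ∈ Icc a b ∧ w 1 ∈ Icc c d}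
      = ENNReal.ofReal (b - a) * ENNReal.ofReal (d - c) := by
  have h := (EuclideanSpace.volume_preserving_symm_measurableEquiv_toLp (Fin 2)).measure_preimage
    (s := Set.univ.pi ![Icc a b, Icc c d])
    (MeasurableSet.univ_pi fun i => by fin_cases i <;> exact measurableSet_Icc).nullMeasurableSet
  rw [volume_pi_pi, Fin.prod_univ_two] at h
  simp only [Matrix.cons_val_zero, Matrix.cons_val_one, Real.volume_Icc] at h
  rw [← h]
  congr 1
  ext w
  simp [Fin.forall_fin_two]

theorem measurableSet_coordinate_box (a b c d : ℝ) :
    MeasurableSet {w : Plane | w 0 ∈ Icc a b ∧ w 1 ∈ Icc c d} := by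
  have h0 : Measurable fun w : Plane => w 0 := by fun_prop
  have h1 : Measurable fun w : Plane => w 1 := by fun_prop
  exact (h0 measurableSet_Icc).inter (h1 measurableSet_Icc)

theorem volume_frame_box (f : OrthonormalBasis (Fin 2) ℝ Plane) (a b c d : ℝ) :
    volume {w : Plane | f.repr w 0 ∈ Icc a b ∧ f.repr w 1 ∈ Icc c d}
      = ENNReal.ofReal (b - a) * ENNReal.ofReal (d - c) := by
  rw [← volume_coordinate_box]
  refine f.measurePreserving_repr.measure_preimage
    (s := {w : Plane | w 0 ∈ Icc a b ∧ w 1 ∈ Icc c d})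
    (measurableSet_coordinate_box a b c d).nullMeasurableSet

theorem exists_frame {p : Plane} (hp : p ≠ 0) :
    ∃ f : OrthonormalBasis (Fin 2) ℝ Plane, ∀ w, inner ℝ p w = ‖p‖ * f.repr w 0 := by
  have hp' : ‖p‖ ≠ 0 := norm_ne_zero_iff.2 hp
  obtain ⟨f, hf⟩ := Orthonormal.exists_orthonormalBasis_extension_of_card_eq
    (𝕜 := ℝ) (E := Plane) (ι := Fin 2) (by simp) (v := fun _ => ‖p‖⁻¹ • p) (s := {0})
    ⟨fun _ => by simp [norm_smul, hp'], fun i j hij => (hij (Subsingleton.elim i j)).elim⟩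
  refine ⟨f, fun w => ?_⟩
  rw [f.repr_apply_apply, hf 0 rfl, real_inner_smul_left]
  field_simp

theorem norm_sq_eq_frame (f : OrthonormalBasis (Fin 2) ℝ Plane) (w : Plane) :
    ‖w‖ ^ 2 = f.repr w 0 ^ 2 + f.repr w 1 ^ 2 := by
  rw [← f.repr.norm_map w, EuclideanSpace.norm_sq_eq, Fin.sum_univ_two]
  simp

theorem inner_eq_frame (f : OrthonormalBasis (Fin 2) ℝ Plane) (v w : Plane) :
    inner ℝ v w = f.repr v 0 * f.repr w 0 + f.repr v 1 * f.repr w 1 := by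
  rw [← f.repr.inner_map_map v w, PiLp.inner_apply, Fin.sum_univ_two]
  simp [mul_comm]

/-- `p` and `q` have length between `ε / 2` and `ε` and are antipodal up to an angle of
order `ε`. -/
def NearlyAntipodal (ε : ℝ) (p q : Plane) : Prop :=
  ε / 2 ≤ ‖p‖ ∧ ‖p‖ ≤ ε ∧ ε / 2 ≤ ‖q‖ ∧ ‖q‖ ≤ ε ∧ inner ℝ p q ≤ 0 ∧
    ‖p‖ ^ 2 * ‖q‖ ^ 2 - inner ℝ p q ^ 2 ≤ ε ^ 6

theorem NearlyAntipodal.symm {ε : ℝ} {p q : Plane} (h : NearlyAntipodal ε p q) :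
    NearlyAntipodal ε q p := by
  obtain ⟨h1, h2, h3, h4, h5, h6⟩ := h
  refine ⟨h3, h4, h1, h2, by rwa [real_inner_comm], ?_⟩
  rw [real_inner_comm, mul_comm]
  exact h6

theorem ne_zero_of_half_le_norm {ε : ℝ} (hε : 0 < ε) {p : Plane} (hp : ε / 2 ≤ ‖p‖) : p ≠ 0 := by
  rintro rfl
  simp at hp
  linarith

/-- The transversal component of a vector nearly antipodal to `p` is of order `ε ^ 2`. -/
theorem NearlyAntipodal.abs_frame_one_le {ε : ℝ} (hε : 0 < ε) {p q : Plane}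
    (h : NearlyAntipodal ε p q) {f : OrthonormalBasis (Fin 2) ℝ Plane}
    (hf : ∀ w, inner ℝ p w = ‖p‖ * f.repr w 0) : |f.repr q 1| ≤ 2 * ε ^ 2 := by
  obtain ⟨h1, -, -, -, -, h6⟩ := h
  rw [hf, norm_sq_eq_frame f q] at h6
  refine abs_le_of_sq_le_sq ?_ (by positivity)
  have hp2 : (ε / 2) ^ 2 ≤ ‖p‖ ^ 2 := by gcongr
  have : (ε / 2) ^ 2 * f.repr q 1 ^ 2 ≤ ε ^ 6 :=
    (mul_le_mul_of_nonneg_right hp2 (sq_nonneg _)).trans (by linarith)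
  have hε2 : 0 < (ε / 2) ^ 2 := by positivity
  refine le_of_mul_le_mul_left (this.trans (le_of_eq ?_)) hε2
  ring

theorem volume_nearlyAntipodal_le {ε : ℝ} (hε : 0 < ε) (p : Plane) :
    volume {q | NearlyAntipodal ε p q} ≤ ENNReal.ofReal (8 * ε ^ 3) := by
  by_cases hp : ε / 2 ≤ ‖p‖
  · obtain ⟨f, hf⟩ := exists_frame (ne_zero_of_half_le_norm hε hp)
    refine (measure_mono (t := {w : Plane | f.repr w 0 ∈ Icc (-ε) ε ∧
      f.repr w 1 ∈ Icc (-(2 * ε ^ 2)) (2 * ε ^ 2)}) ?_).trans (le_of_eq ?_)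
    · intro q hq
      refine ⟨abs_le.1 (abs_le_of_sq_le_sq ?_ hε.le), abs_le.1 (hq.abs_frame_one_le hε hf)⟩
      have h1 := norm_sq_eq_frame f q
      have h2 : ‖q‖ ^ 2 ≤ ε ^ 2 := by have := hq.2.2.2.1; gcongr
      nlinarith [sq_nonneg (f.repr q 1)]
    · rw [volume_frame_box, ← ENNReal.ofReal_mul (by linarith)]
      congr 1; ring
  · have : {q | NearlyAntipodal ε p q} = ∅ :=
      Set.eq_empty_of_forall_notMem fun q hq => hp hq.1
    rw [this]; simp

theorem pow_four_le_of_le {ε : ℝ} (hε : 0 < ε) (hε' : ε ≤ 1 / 8) : ε ^ 4 ≤ ε ^ 2 / 64 := by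
  have h : ε ^ 2 ≤ (1 / 8) ^ 2 := by gcongr
  nlinarith [sq_nonneg ε]

theorem le_volume_nearlyAntipodal {ε : ℝ} (hε : 0 < ε) (hε' : ε ≤ 1 / 8) {p : Plane}
    (hp1 : ε / 2 ≤ ‖p‖) (hp2 : ‖p‖ ≤ ε) :
    ENNReal.ofReal (ε ^ 3 / 2) ≤ volume {q | NearlyAntipodal ε p q} := by
  obtain ⟨f, hf⟩ := exists_frame (ne_zero_of_half_le_norm hε hp1)
  refine le_trans (le_of_eq ?_) (measure_mono (s := {w : Plane | f.repr w 0 ∈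
    Icc (-(3 / 4 * ε)) (-(ε / 2)) ∧ f.repr w 1 ∈ Icc (-ε ^ 2) (ε ^ 2)}) ?_)
  · rw [volume_frame_box, ← ENNReal.ofReal_mul (by linarith)]
    congr 1; ring
  · rintro q ⟨⟨ha, hb⟩, hc, hd⟩
    have hn := norm_sq_eq_frame f q
    have h1 : f.repr q 1 ^ 2 ≤ ε ^ 4 := by nlinarith
    have h4 : ε ^ 4 ≤ ε ^ 2 / 64 := pow_four_le_of_le hε hε'
    have h0 : f.repr q 0 ^ 2 ≤ 9 / 16 * ε ^ 2 := by nlinarith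
    have h0' : ε ^ 2 / 4 ≤ f.repr q 0 ^ 2 := by nlinarith
    refine ⟨hp1, hp2, ?_, ?_, ?_, ?_⟩
    · refine le_of_sq_le_sq ?_ (norm_nonneg _)
      nlinarith [sq_nonneg (f.repr q 1)]
    · refine le_of_sq_le_sq ?_ hε.le
      nlinarith
    · rw [hf]
      exact mul_nonpos_of_nonneg_of_nonpos (norm_nonneg _) (by linarith)
    · rw [hf, hn]
      have : ‖p‖ ^ 2 ≤ ε ^ 2 := by gcongr
      calc _ = ‖p‖ ^ 2 * f.repr q 1 ^ 2 := by ring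
        _ ≤ ε ^ 2 * ε ^ 4 := by gcongr
        _ = _ := by ring

/-- Coordinates of a point of the unit disk at distance more than `1` from `(ρ, 0)` and
`(a, b)`. -/
theorem uncovered_coordinates {ε ρ a b x y : ℝ} (hε : 0 < ε) (hρ : 0 < ρ) (hρε : ρ ≤ ε)
    (ha : a ≤ -(ε / 4)) (hb : |b| ≤ 2 * ε ^ 2) (hab : a ^ 2 + b ^ 2 ≤ ε ^ 2)
    (hxy : x ^ 2 + y ^ 2 ≤ 1) (h1 : 1 < x ^ 2 + y ^ 2 - 2 * (ρ * x) + ρ ^ 2)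
    (h2 : 1 < x ^ 2 + y ^ 2 - 2 * (x * a + y * b) + (a ^ 2 + b ^ 2)) :
    (-(10 * ε) ≤ x ∧ x ≤ 10 * ε) ∧ |y| ≤ 1 ∧ 1 - 121 * ε ^ 2 ≤ |y| := by
  have hy : |y| ≤ 1 := abs_le_of_sq_le_sq (by linarith [sq_nonneg x]) zero_le_one
  have hup : x ≤ 10 * ε := by
    have : ρ * (2 * x) ≤ ρ * ρ := by linarith
    linarith [le_of_mul_le_mul_left this hρ]
  have hlow : -(10 * ε) ≤ x := by
    by_contra! hcon
    have hyb : |y * b| ≤ 1 * (2 * ε ^ 2) := by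
      rw [abs_mul]
      exact mul_le_mul hy hb (abs_nonneg _) zero_le_one
    have hxa : 10 * ε * (ε / 4) ≤ -x * -a :=
      mul_le_mul (by linarith) (by linarith) (by linarith) (by linarith)
    linarith [(abs_le.1 hyb).1, sq_nonneg ε]
  have hx2 : x ^ 2 ≤ (10 * ε) ^ 2 := sq_le_sq' hlow hup
  have hρx : -(10 * ε ^ 2) ≤ ρ * x := by
    have : ρ * -x ≤ ε * (10 * ε) :=
      mul_le_mul_of_nonneg hρε (by linarith) hρ.le (by linarith)
    linarith
  have hρ2 : ρ ^ 2 ≤ ε ^ 2 := by gcongr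
  have hy2 : 1 - 121 * ε ^ 2 ≤ |y| ^ 2 := by rw [sq_abs]; linarith
  exact ⟨⟨hlow, hup⟩, hy, hy2.trans (pow_le_of_le_one (abs_nonneg _) hy two_ne_zero)⟩

/-- The part of the unit disk around the origin left uncovered by the unit disks around two
nearly antipodal points has area of order `ε ^ 3`. -/
theorem volume_uncovered_le {ε : ℝ} (hε : 0 < ε) (hε' : ε ≤ 1 / 8) {p q : Plane}
    (h : NearlyAntipodal ε p q) :
    volume {w : Plane | ‖w‖ ≤ 1 ∧ 1 < ‖w - p‖ ∧ 1 < ‖w - q‖}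
      ≤ ENNReal.ofReal (4840 * ε ^ 3) := by
  obtain ⟨f, hf⟩ := exists_frame (ne_zero_of_half_le_norm hε h.1)
  have hq1 := abs_le.1 (h.abs_frame_one_le hε hf)
  obtain ⟨hp1, hp2, hq2, hq3, hpq, -⟩ := h
  have hppos : 0 < ‖p‖ := by linarith
  have hqsq := norm_sq_eq_frame f q
  have hq0 : f.repr q 0 ≤ -(ε / 4) := by
    have hneg : f.repr q 0 ≤ 0 := by
      rw [hf] at hpq
      exact nonpos_of_mul_nonpos_right hpq hppos
    have : (ε / 4) ^ 2 ≤ (-f.repr q 0) ^ 2 := by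
      have a1 : (ε / 2) ^ 2 ≤ ‖q‖ ^ 2 := by gcongr
      have a2 : f.repr q 1 ^ 2 ≤ (2 * ε ^ 2) ^ 2 := sq_le_sq' hq1.1 hq1.2
      have a3 : ε ^ 4 ≤ ε ^ 2 / 64 := pow_four_le_of_le hε hε'
      nlinarith
    linarith [le_of_sq_le_sq this (by linarith)]
  have hsub : {w : Plane | ‖w‖ ≤ 1 ∧ 1 < ‖w - p‖ ∧ 1 < ‖w - q‖} ⊆
      {w : Plane | f.repr w 0 ∈ Icc (-(10 * ε)) (10 * ε) ∧
        f.repr w 1 ∈ Icc (1 - 121 * ε ^ 2) 1} ∪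
      {w : Plane | f.repr w 0 ∈ Icc (-(10 * ε)) (10 * ε) ∧
        f.repr w 1 ∈ Icc (-1) (-(1 - 121 * ε ^ 2))} := by
    rintro w ⟨hw, hwp, hwq⟩
    have hwsq := norm_sq_eq_frame f w
    have hw1 : ‖w‖ ^ 2 ≤ 1 := by nlinarith [norm_nonneg w]
    have e1 : 1 < ‖w‖ ^ 2 - 2 * (‖p‖ * f.repr w 0) + ‖p‖ ^ 2 := by
      rw [← hf, ← real_inner_comm, ← norm_sub_sq_real]
      nlinarith
    have e2 : 1 < ‖w‖ ^ 2 - 2 * (f.repr w 0 * f.repr q 0 + f.repr w 1 * f.repr q 1)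
        + ‖q‖ ^ 2 := by
      rw [← inner_eq_frame, ← norm_sub_sq_real]
      nlinarith
    rw [hwsq] at hw1 e1 e2
    rw [hqsq] at e2
    obtain ⟨hw0, hw1', habs⟩ := uncovered_coordinates hε hppos hp2 hq0 (abs_le.2 hq1)
      (hqsq ▸ pow_le_pow_left₀ (norm_nonneg q) hq3 2) hw1 e1 e2
    rcases le_total 0 (f.repr w 1) with hs | hs
    · rw [abs_of_nonneg hs] at habs hw1'
      exact Or.inl ⟨hw0, habs, hw1'⟩
    · rw [abs_of_nonpos hs] at habs hw1'
      exact Or.inr ⟨hw0, by linarith, by linarith⟩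
  refine (measure_mono hsub).trans ((measure_union_le _ _).trans (le_of_eq ?_))
  rw [volume_frame_box, volume_frame_box, ← ENNReal.ofReal_mul (by linarith),
    ← ENNReal.ofReal_mul (by linarith), ← ENNReal.ofReal_add (by nlinarith [pow_pos hε 3])
      (by nlinarith [pow_pos hε 3])]
  congr 1; ring

theorem volume_square {ℓ : ℝ} (hℓ : 0 < ℓ) : volume (square ℓ) = ENNReal.ofReal (ℓ ^ 2) := by
  rw [square, volume_coordinate_box, sub_zero, ← ENNReal.ofReal_mul hℓ.le, sq]

theorem isProbabilityMeasure_unifSq {ℓ : ℝ} (hℓ : 0 < ℓ) : IsProbabilityMeasure (unifSq ℓ) := by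
  refine ⟨?_⟩
  have h0 : volume (square ℓ) ≠ 0 := by
    rw [volume_square hℓ, ne_eq, ENNReal.ofReal_eq_zero, not_le]
    positivity
  have h1 : volume (square ℓ) ≠ ⊤ := by
    rw [volume_square hℓ]
    exact ENNReal.ofReal_ne_top
  simp [unifSq, ENNReal.inv_mul_cancel h0 h1]

theorem unifSq_le_of_volume_le {ℓ v : ℝ} (hℓ : 0 < ℓ) {S : Set Plane}
    (hS : volume S ≤ ENNReal.ofReal v) : unifSq ℓ S ≤ ENNReal.ofReal (v / ℓ ^ 2) := by
  rw [ENNReal.ofReal_div_of_pos (by positivity), unifSq, Measure.smul_apply, smul_eq_mul,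
    volume_square hℓ, mul_comm, ENNReal.div_eq_inv_mul, mul_comm]
  gcongr
  exact (Measure.restrict_le_self S).trans hS

theorem le_unifSq_of_le_volume {ℓ v : ℝ} (hℓ : 0 < ℓ) {S : Set Plane} (hsub : S ⊆ square ℓ)
    (hS : ENNReal.ofReal v ≤ volume S) : ENNReal.ofReal (v / ℓ ^ 2) ≤ unifSq ℓ S := by
  rw [ENNReal.ofReal_div_of_pos (by positivity), unifSq, Measure.smul_apply, smul_eq_mul,
    volume_square hℓ, mul_comm, ENNReal.div_eq_inv_mul, mul_comm, Measure.restrict_eq_self _ hsub]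
  gcongr

theorem volume_setOf_sub (x : Plane) (P : Plane → Prop) :
    volume {z | P (z - x)} = volume {z | P z} :=
  (measurePreserving_sub_right volume x).measure_preimage_equiv
    (f := MeasurableEquiv.subRight x) {z | P z}

/-- The points of the square `[0, ℓ]²` at distance at least `ε` from its sides. -/
def innerSquare (ℓ ε : ℝ) : Set Plane := {p | p 0 ∈ Icc ε (ℓ - ε) ∧ p 1 ∈ Icc ε (ℓ - ε)}

theorem measurableSet_innerSquare (ℓ ε : ℝ) : MeasurableSet (innerSquare ℓ ε) :=
  measurableSet_coordinate_box _ _ _ _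

theorem unifSq_compl_innerSquare_le {ℓ ε : ℝ} (hℓ : 0 < ℓ) (hε : 0 < ε) (h : 2 * ε ≤ ℓ) :
    unifSq ℓ (innerSquare ℓ ε)ᶜ ≤ ENNReal.ofReal (4 * ε / ℓ) := by
  have := isProbabilityMeasure_unifSq hℓ
  have hsub : innerSquare ℓ ε ⊆ square ℓ := fun p hp =>
    ⟨⟨hε.le.trans hp.1.1, hp.1.2.trans (by linarith)⟩,
      ⟨hε.le.trans hp.2.1, hp.2.2.trans (by linarith)⟩⟩
  have hin := le_unifSq_of_le_volume (v := (ℓ - 2 * ε) ^ 2) hℓ hsub (le_of_eq (by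
    rw [innerSquare, volume_coordinate_box, ← ENNReal.ofReal_mul (by linarith)]
    congr 1; ring))
  rw [prob_compl_eq_one_sub (measurableSet_innerSquare ℓ ε), tsub_le_iff_right]
  refine le_trans ?_ (add_le_add_right hin _)
  rw [← ENNReal.ofReal_add (by positivity) (by positivity), ← ENNReal.ofReal_one]
  refine ENNReal.ofReal_le_ofReal ?_
  rw [div_add_div _ _ hℓ.ne' (by positivity), le_div_iff₀ (by positivity)]
  nlinarith [mul_pos hℓ (sq_pos_of_pos hε)]

theorem mem_square_of_norm_sub_le {ℓ ε : ℝ} {x z : Plane} (hx : x ∈ innerSquare ℓ ε)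
    (hz : ‖z - x‖ ≤ ε) : z ∈ square ℓ := by
  have h (i : Fin 2) : |z i - x i| ≤ ε := (PiLp.norm_apply_le (z - x) i).trans hz
  obtain ⟨⟨a, b⟩, c, d⟩ := hx
  have h0 := abs_le.1 (h 0)
  have h1 := abs_le.1 (h 1)
  exact ⟨⟨by linarith, by linarith⟩, by linarith, by linarith⟩

theorem measurableSet_nearlyAntipodal (ε : ℝ) (x : Plane) :
    MeasurableSet {p : Plane × Plane | NearlyAntipodal ε (p.1 - x) (p.2 - x)} := by
  simp only [NearlyAntipodal]
  have h1 : Measurable fun p : Plane × Plane => ‖p.1 - x‖ := by fun_prop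
  have h2 : Measurable fun p : Plane × Plane => ‖p.2 - x‖ := by fun_prop
  have h3 : Measurable fun p : Plane × Plane => inner ℝ (p.1 - x) (p.2 - x) := by fun_prop
  exact (measurableSet_le measurable_const h1).inter <| (measurableSet_le h1 measurable_const).inter
    <| (measurableSet_le measurable_const h2).inter <| (measurableSet_le h2 measurable_const).inter
    <| (measurableSet_le h3 measurable_const).inter <|
      measurableSet_le (((h1.pow_const 2).mul (h2.pow_const 2)).sub (h3.pow_const 2))
        measurable_const

theorem measurableSet_uncovered (x : Plane) :
    MeasurableSet {p : Plane × Plane × Plane |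
      dist x p.2.2 ≤ 1 ∧ 1 < dist p.1 p.2.2 ∧ 1 < dist p.2.1 p.2.2} := by
  have h1 : Measurable fun p : Plane × Plane × Plane => dist x p.2.2 := by fun_prop
  have h2 : Measurable fun p : Plane × Plane × Plane => dist p.1 p.2.2 := by fun_prop
  have h3 : Measurable fun p : Plane × Plane × Plane => dist p.2.1 p.2.2 := by fun_prop
  exact (measurableSet_le h1 measurable_const).inter <|
    (measurableSet_lt measurable_const h2).inter (measurableSet_lt measurable_const h3)

theorem le_lintegral_unifSq_nearlyAntipodal {ℓ ε : ℝ} (hℓ : 0 < ℓ) (hε : 0 < ε)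
    (hε' : ε ≤ 1 / 8) {x : Plane} (hx : x ∈ innerSquare ℓ ε) :
    ENNReal.ofReal (ε ^ 5 / (16 * ℓ ^ 4))
      ≤ ∫⁻ y, unifSq ℓ {z | NearlyAntipodal ε (y - x) (z - x)} ∂(unifSq ℓ) := by
  let S : Set Plane := {p | p 0 ∈ Icc (ε / 2) (3 / 4 * ε) ∧ p 1 ∈ Icc 0 (ε / 2)}
  have hSm : MeasurableSet {y | y - x ∈ S} :=
    (measurableSet_coordinate_box _ _ _ _).preimage (measurable_sub_const x)
  have hS : ∀ p ∈ S, ε / 2 ≤ ‖p‖ ∧ ‖p‖ ≤ ε := by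
    rintro p ⟨⟨h1, h2⟩, h3, h4⟩
    have hn : ‖p‖ ^ 2 = p 0 ^ 2 + p 1 ^ 2 := by
      rw [EuclideanSpace.norm_sq_eq, Fin.sum_univ_two]
      simp
    constructor
    · refine le_of_sq_le_sq ?_ (norm_nonneg _)
      nlinarith
    · refine le_of_sq_le_sq ?_ hε.le
      nlinarith
  have hvS : ENNReal.ofReal (ε ^ 2 / 8 / ℓ ^ 2) ≤ unifSq ℓ {y | y - x ∈ S} := by
    refine le_unifSq_of_le_volume hℓ
      (fun y hy => mem_square_of_norm_sub_le hx (hS _ hy).2) (le_of_eq ?_)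
    rw [volume_setOf_sub x (· ∈ S)]
    change _ = volume S
    rw [volume_coordinate_box, ← ENNReal.ofReal_mul (by linarith)]
    congr 1; ring
  have hsec : ∀ y ∈ {y | y - x ∈ S}, ENNReal.ofReal (ε ^ 3 / 2 / ℓ ^ 2) ≤
      unifSq ℓ {z | NearlyAntipodal ε (y - x) (z - x)} := by
    intro y hy
    refine le_unifSq_of_le_volume hℓ
      (fun z hz => mem_square_of_norm_sub_le hx hz.2.2.2.1) ?_
    exact (le_volume_nearlyAntipodal hε hε' (hS _ hy).1 (hS _ hy).2).trans
      (volume_setOf_sub x (NearlyAntipodal ε (y - x))).ge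
  calc _ = ENNReal.ofReal (ε ^ 3 / 2 / ℓ ^ 2) * ENNReal.ofReal (ε ^ 2 / 8 / ℓ ^ 2) := by
        rw [← ENNReal.ofReal_mul (by positivity)]
        congr 1
        field_simp
        ring
    _ ≤ ENNReal.ofReal (ε ^ 3 / 2 / ℓ ^ 2) * unifSq ℓ {y | y - x ∈ S} := by gcongr
    _ = ∫⁻ _ in {y | y - x ∈ S}, ENNReal.ofReal (ε ^ 3 / 2 / ℓ ^ 2) ∂(unifSq ℓ) := by simp
    _ ≤ ∫⁻ y in {y | y - x ∈ S}, unifSq ℓ {z | NearlyAntipodal ε (y - x) (z - x)} ∂(unifSq ℓ) :=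
        setLIntegral_mono' hSm hsec
    _ ≤ _ := setLIntegral_le_lintegral _ _

theorem measurable_pruned {n : ℕ} (i : Fin n) :
    Measurable fun ω : Fin n → Plane => Pruned ω i := by
  have hd : ∀ j k : Fin n, Measurable fun ω : Fin n → Plane => dist (ω j) (ω k) ≤ 1 :=
    fun j k => measurableSet_setOfPred.1 <| measurableSet_le
      ((measurable_pi_apply j).dist (measurable_pi_apply k)) measurable_const
  have hn : ∀ j k : Fin n, Measurable fun ω : Fin n → Plane => k ∈ nbhd ω j :=
    fun j k => measurable_const.or (measurable_const.and (hd j k))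
  refine Measurable.exists fun i₁ => Measurable.exists fun i₂ => ?_
  refine measurable_const.and <| measurable_const.and <| (hn i i₁).and <| (hn i i₂).and <|
    (hd i₁ i₂).and <| Measurable.forall fun k => ?_
  exact (hn i k).imp ((hn i₁ k).or (hn i₂ k))

/-- A vertex that is not pruned has, for every nearly antipodal pair of neighbors with larger
indices, another neighbor outside the two unit disks around the pair. -/
theorem exists_uncovered_of_not_pruned {n : ℕ} {ω : Fin n → Plane} {i a b : Fin n} {ε : ℝ}
    (hε' : ε ≤ 1 / 8) (h : ¬ Pruned ω i) (hia : i < a) (hab : a < b)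
    (hG : NearlyAntipodal ε (ω a - ω i) (ω b - ω i)) :
    ∃ k, k ≠ i ∧ k ≠ a ∧ k ≠ b ∧
      dist (ω i) (ω k) ≤ 1 ∧ 1 < dist (ω a) (ω k) ∧ 1 < dist (ω b) (ω k) := by
  have hda : dist (ω a) (ω i) ≤ 1 / 8 := by
    rw [dist_eq_norm]
    exact hG.2.1.trans hε'
  have hdb : dist (ω b) (ω i) ≤ 1 / 8 := by
    rw [dist_eq_norm]
    exact hG.2.2.2.1.trans hε'
  have hba : dist (ω b) (ω a) ≤ 1 := by
    linarith [dist_triangle_right (ω b) (ω a) (ω i)]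
  by_contra! hcon
  refine h ⟨b, a, hia, hab, Or.inr ⟨(hia.trans hab).ne', ?_⟩, Or.inr ⟨hia.ne', ?_⟩, hba, ?_⟩
  · rw [dist_comm]; linarith
  · rw [dist_comm]; linarith
  rintro k (rfl | ⟨hki, hk⟩)
  · exact Or.inl (Or.inr ⟨(hia.trans hab).ne, by linarith⟩)
  by_cases hka : k = a
  · exact Or.inr (Or.inl hka)
  by_cases hkb : k = b
  · exact Or.inl (Or.inl hkb)
  by_cases h1 : 1 < dist (ω a) (ω k)
  · exact Or.inl (Or.inr ⟨hkb, hcon k hki hka hkb hk h1⟩)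
  · exact Or.inr (Or.inr ⟨hka, not_lt.1 h1⟩)

theorem measure_not_pruned_fiber_le {n M : ℕ} {ℓ ε : ℝ} (hℓ : 0 < ℓ) (hε : 0 < ε)
    (hε' : ε ≤ 1 / 8) (hM : 0 < M) {i : Fin n} (hi : (i : ℕ) + 2 * M < n) {x : Plane}
    (hx : x ∈ innerSquare ℓ ε) :
    gMeasure n ℓ {ω | ¬ Pruned (Function.update ω i x) i}
      ≤ ENNReal.ofReal (16 * ℓ ^ 4 / (M ^ 2 * ε ^ 5) + 256 * ℓ ^ 2 / (M * ε ^ 2)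
        + n * (4840 * ε ^ 3 / ℓ ^ 2)) := by
  have := isProbabilityMeasure_unifSq hℓ
  let G : Plane → Plane → Prop := fun y z => NearlyAntipodal ε (y - x) (z - x)
  let R : Plane → Plane → Plane → Prop := fun y z w => dist x w ≤ 1 ∧ 1 < dist y w ∧ 1 < dist z w
  let A : Finset (Fin n) := Finset.Ioc i ⟨i + M, by omega⟩
  let B : Finset (Fin n) := Finset.Ioc ⟨i + M, by omega⟩ ⟨i + 2 * M, hi⟩
  have hlt : ∀ a ∈ A, ∀ b ∈ B, i < a ∧ a < b := fun a ha b hb =>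
    ⟨(Finset.mem_Ioc.1 ha).1, (Finset.mem_Ioc.1 ha).2.trans_lt (Finset.mem_Ioc.1 hb).1⟩
  have hAB : Disjoint A B := Finset.disjoint_left.2 fun a ha hb => (hlt a ha a hb).2.false
  have hA : A.card = M := by simp [A, Fin.card_Ioc]
  have hB : B.card = M := by simp [B, Fin.card_Ioc]; omega
  have hGτ : ∀ y, unifSq ℓ {z | G y z} ≤ ENNReal.ofReal (8 * ε ^ 3 / ℓ ^ 2) := fun y => by
    refine unifSq_le_of_volume_le hℓ ?_
    exact (volume_setOf_sub x (NearlyAntipodal ε (y - x))).le.trans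
      (volume_nearlyAntipodal_le hε _)
  have hGτ' : ∀ z, unifSq ℓ {y | G y z} ≤ ENNReal.ofReal (8 * ε ^ 3 / ℓ ^ 2) := fun z =>
    (measure_mono fun y hy => NearlyAntipodal.symm hy).trans (hGτ z)
  have hθ := le_lintegral_unifSq_nearlyAntipodal hℓ hε hε' hx
  have hθtop : ∫⁻ y, unifSq ℓ {z | G y z} ∂(unifSq ℓ) ≠ ⊤ := by
    refine ne_top_of_le_ne_top ENNReal.one_ne_top ?_
    exact (lintegral_mono fun y => prob_le_one).trans (by simp)
  set θ := (∫⁻ y, unifSq ℓ {z | G y z} ∂(unifSq ℓ)).toReal with hθdef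
  have hθle : ε ^ 5 / (16 * ℓ ^ 4) ≤ θ := (ENNReal.ofReal_le_iff_le_toReal hθtop).1 hθ
  have hθ0 : 0 < ε ^ 5 / (16 * ℓ ^ 4) := by positivity
  have hMpos : (0 : ℝ) < M := by exact_mod_cast hM
  have hnone := measure_forall_not_pair_le hAB hA hB hM (measurableSet_nearlyAntipodal ε x)
    (by positivity) (hθ0.trans_le hθle) hGτ hGτ' (ENNReal.ofReal_toReal hθtop).symm
  have hhit := measure_forall_pairs_hit_le (μ := unifSq ℓ) A B (G := G) (R := R)
    (measurableSet_nearlyAntipodal ε x) (measurableSet_uncovered x)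
    (ρ := ENNReal.ofReal (4840 * ε ^ 3 / ℓ ^ 2)) (fun y z hyz => by
      refine unifSq_le_of_volume_le hℓ ?_
      refine le_trans (le_of_eq ?_) (volume_uncovered_le hε hε' hyz)
      rw [← volume_setOf_sub x fun w => ‖w‖ ≤ 1 ∧ 1 < ‖w - (y - x)‖ ∧ 1 < ‖w - (z - x)‖]
      congr 1
      ext w
      simp only [R, Set.mem_ofPred_eq, sub_sub_sub_cancel_right, dist_eq_norm, norm_sub_rev _ w])
  have hsub : {ω : Fin n → Plane | ¬ Pruned (Function.update ω i x) i} ⊆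
      {ω | ∀ a ∈ A, ∀ b ∈ B, ¬ G (ω a) (ω b)} ∪
      {ω | (∃ a ∈ A, ∃ b ∈ B, G (ω a) (ω b)) ∧
        ∀ a ∈ A, ∀ b ∈ B, G (ω a) (ω b) → ∃ k, k ≠ a ∧ k ≠ b ∧ R (ω a) (ω b) (ω k)} := by
    intro ω hω
    by_cases hex : ∃ a ∈ A, ∃ b ∈ B, G (ω a) (ω b)
    · refine Or.inr ⟨hex, fun a ha b hb hab => ?_⟩
      obtain ⟨hia, hab'⟩ := hlt a ha b hb
      have hai := hia.ne'
      have hbi := (hia.trans hab').ne'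
      obtain ⟨k, hki, hka, hkb, hk⟩ := exists_uncovered_of_not_pruned hε' hω hia hab' (by
        rw [Function.update_of_ne hai, Function.update_of_ne hbi, Function.update_self]
        exact hab)
      rw [Function.update_of_ne hai, Function.update_of_ne hbi, Function.update_of_ne hki,
        Function.update_self] at hk
      exact ⟨k, hka, hkb, hk⟩
    · push Not at hex
      exact Or.inl hex
  refine (measure_mono hsub).trans ((measure_union_le _ _).trans
    ((add_le_add hnone hhit).trans ?_))
  rw [Fintype.card_fin, ← ENNReal.ofReal_natCast n, ← ENNReal.ofReal_mul (by positivity),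
    ← ENNReal.ofReal_add (by positivity) (by positivity)]
  refine ENNReal.ofReal_le_ofReal (add_le_add_left (add_le_add ?_ ?_) _)
  · calc 1 / (M ^ 2 * θ) ≤ 1 / (M ^ 2 * (ε ^ 5 / (16 * ℓ ^ 4))) := by gcongr
      _ = _ := by field_simp
  · calc 2 * (8 * ε ^ 3 / ℓ ^ 2) / (M * θ)
        ≤ 2 * (8 * ε ^ 3 / ℓ ^ 2) / (M * (ε ^ 5 / (16 * ℓ ^ 4))) := by gcongr
      _ = _ := by field_simp; norm_num

theorem measureReal_not_pruned_le {n M : ℕ} {ℓ t ε : ℝ} (hℓ : 1 ≤ ℓ) (ht : 0 < t) (ht1 : t ≤ 1)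
    (hε : 0 < ε) (hε' : ε ≤ 1 / 8) (hεt : ε ≤ t ^ 5) (hnε : n * ε ^ 3 = t * ℓ ^ 2)
    (hM : t * n / 4 ≤ M) {i : Fin n} (hi : (i : ℕ) + 2 * M < n) :
    (gMeasure n ℓ).real {ω | ¬ Pruned ω i} ≤ 6124 * t := by
  have hℓ0 : 0 < ℓ := by linarith
  have := isProbabilityMeasure_unifSq hℓ0
  have hn : (0 : ℝ) < n := by
    have : 0 < n := i.pos
    exact_mod_cast this
  have htn : 0 < t * n / 4 := by positivity
  have hMpos : (0 : ℝ) < M := htn.trans_le hM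
  have hfib := measure_pi_le_add_of_fiber_le (μ := unifSq ℓ) i
    (measurableSet_setOfPred.2 (measurable_pruned i).not)
    (measurableSet_innerSquare ℓ ε).compl (fun x hx => measure_not_pruned_fiber_le hℓ0 hε hε'
      (by exact_mod_cast hMpos) hi (not_not.1 hx))
  have hbdry := unifSq_compl_innerSquare_le hℓ0 hε (by linarith)
  have hεt1 : ε ≤ t := hεt.trans (pow_le_of_le_one ht.le ht1 (by norm_num))
  have b1 : 16 * ℓ ^ 4 / (M ^ 2 * ε ^ 5) ≤ 256 * t := by
    calc 16 * ℓ ^ 4 / (M ^ 2 * ε ^ 5) ≤ 16 * ℓ ^ 4 / ((t * n / 4) ^ 2 * ε ^ 5) := by gcongr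
      _ = 256 * (ε * (t * ℓ ^ 2) ^ 2) / (t ^ 4 * (n * ε ^ 3) ^ 2) := by field_simp; norm_num
      _ = 256 * ε / t ^ 4 := by rw [hnε]; field_simp
      _ ≤ 256 * t ^ 5 / t ^ 4 := by gcongr
      _ = 256 * t := by field_simp
  have b2 : 256 * ℓ ^ 2 / (M * ε ^ 2) ≤ 1024 * t := by
    calc 256 * ℓ ^ 2 / (M * ε ^ 2) ≤ 256 * ℓ ^ 2 / ((t * n / 4) * ε ^ 2) := by gcongr
      _ = 1024 * (ε * (t * ℓ ^ 2)) / (t ^ 2 * (n * ε ^ 3)) := by field_simp; norm_num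
      _ = 1024 * ε / t ^ 2 := by rw [hnε]; field_simp
      _ ≤ 1024 * t ^ 5 / t ^ 2 := by gcongr
      _ = 1024 * t ^ 3 := by field_simp
      _ ≤ 1024 * t := by
        gcongr
        exact pow_le_of_le_one ht.le ht1 (by norm_num)
  have b3 : n * (4840 * ε ^ 3 / ℓ ^ 2) = 4840 * t := by
    calc n * (4840 * ε ^ 3 / ℓ ^ 2) = 4840 * (n * ε ^ 3) / ℓ ^ 2 := by ring
      _ = 4840 * t := by rw [hnε]; field_simp
  have b4 : 4 * ε / ℓ ≤ 4 * t := by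
    rw [div_le_iff₀ hℓ0]
    nlinarith
  refine ENNReal.toReal_le_of_le_ofReal (by positivity) ?_
  refine hfib.trans ((add_le_add_left hbdry _).trans ?_)
  rw [← ENNReal.ofReal_add (by positivity) (by positivity)]
  exact ENNReal.ofReal_le_ofReal (by linarith)

theorem sub_U_eq_sum {n : ℕ} (ω : Fin n → Plane) :
    (n : ℝ) - U n ω = ∑ i, {ω | ¬ Pruned ω i}.indicator (fun _ => (1 : ℝ)) ω := by
  classical
  have h1 : U n ω = (Finset.univ.filter fun i => Pruned ω i).card := by
    rw [U, ← Set.ncard_coe_finset]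
    simp
  have h2 := Finset.card_filter_add_card_filter_not (s := Finset.univ) fun i => Pruned ω i
  rw [Finset.card_univ, Fintype.card_fin] at h2
  simp only [Set.indicator_apply, Set.mem_ofPred_eq, Finset.sum_boole]
  rw [h1, sub_eq_iff_eq_add', ← Nat.cast_add, h2]

/-- Explicit form of the bound, with `ε` the scale at which pruning pairs are found and `t` the
resulting bound on the fraction of vertices that are not pruned. -/
theorem integral_sub_U_le {n : ℕ} {ℓ t ε : ℝ} (hℓ : 1 ≤ ℓ) (ht : 0 < t) (ht2 : t ≤ 1 / 2)
    (hε : 0 < ε) (hεt : ε ≤ t ^ 5) (hnε : n * ε ^ 3 = t * ℓ ^ 2) :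
    ∫ ω, ((n : ℝ) - U n ω) ∂(gMeasure n ℓ) ≤ 6125 * (t * n) := by
  have hℓ0 : 0 < ℓ := by linarith
  have := isProbabilityMeasure_unifSq hℓ0
  have hprob : IsProbabilityMeasure (gMeasure n ℓ) := by
    unfold gMeasure
    infer_instance
  have ht1 : t ≤ 1 := by linarith
  have hε' : ε ≤ 1 / 8 := by
    refine hεt.trans ((pow_le_pow_left₀ ht.le ht2 5).trans ?_)
    norm_num
  have htn : 2 ≤ t * n := by
    have h1 : t * 1 ≤ t * (t * n * t ^ 13) := by
      calc t * 1 ≤ t * ℓ ^ 2 := by gcongr; exact one_le_pow₀ hℓ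
        _ = n * ε ^ 3 := hnε.symm
        _ ≤ n * (t ^ 5) ^ 3 := by gcongr
        _ = _ := by ring
    have h2 : t ^ 13 ≤ 1 / 2 := (pow_le_of_le_one ht.le ht1 (by norm_num)).trans ht2
    have h3 : 1 ≤ t * n * t ^ 13 := le_of_mul_le_mul_left h1 ht
    have h4 : t * n * t ^ 13 ≤ t * n * (1 / 2) := by gcongr
    linarith
  set M := ⌊t * n / 2⌋₊ with hMdef
  have hM1 : (M : ℝ) ≤ t * n / 2 := Nat.floor_le (by positivity)
  have hM2 : t * n / 4 ≤ M := by
    have h1 : (1 : ℝ) ≤ M := by exact_mod_cast (Nat.one_le_floor_iff _).2 (by linarith)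
    have h2 := Nat.lt_floor_add_one (t * n / 2)
    linarith
  have hme : ∀ i : Fin n, MeasurableSet {ω : Fin n → Plane | ¬ Pruned ω i} := fun i =>
    measurableSet_setOfPred.2 (measurable_pruned i).not
  simp_rw [sub_U_eq_sum]
  rw [integral_finsetSum _ fun i _ => (integrable_const (1 : ℝ)).indicator (hme i)]
  simp_rw [integral_indicator_const _ (hme _), smul_eq_mul, mul_one]
  have hpt : ∀ i : Fin n, (gMeasure n ℓ).real {ω | ¬ Pruned ω i} ≤
      6124 * t + if n ≤ (i : ℕ) + 2 * M then 1 else 0 := by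
    intro i
    split_ifs with h
    · linarith [measureReal_le_one (μ := gMeasure n ℓ) (s := {ω | ¬ Pruned ω i})]
    · rw [add_zero]
      exact measureReal_not_pruned_le hℓ ht ht1 hε hε' hεt hnε hM2 (not_le.1 h)
  have hcard : (Finset.univ.filter fun i : Fin n => n ≤ (i : ℕ) + 2 * M).card ≤ 2 * M := by
    calc _ ≤ (Finset.Ico (n - 2 * M) n).card := by
          refine Finset.card_le_card_of_injOn (fun i => (i : ℕ)) (fun i hi => ?_)
            Fin.val_injective.injOn
          have := (Finset.mem_filter.1 hi).2
          simp
          omega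
      _ ≤ 2 * M := by
          rw [Nat.card_Ico]
          omega
  have hcard' : ((Finset.univ.filter fun i : Fin n => n ≤ (i : ℕ) + 2 * M).card : ℝ) ≤ 2 * M := by
    exact_mod_cast hcard
  refine (Finset.sum_le_sum fun i _ => hpt i).trans ?_
  rw [Finset.sum_add_distrib, Finset.sum_boole, Finset.sum_const, Finset.card_univ,
    Fintype.card_fin, nsmul_eq_mul]
  linarith

/-- Under the stated conditions on `⟨ℓ_n⟩`, there is `K > 0` such that for all
sufficiently large `n`, the expected size `E(C) = E(n − U)` of the Rule 2 dominating set is at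
most `K n / (log log n)^{3/2}`. -/
theorem expected_dominating_set_upper_bound (cbar : ℝ) (hcbar : 0 < cbar) (ℓ : ℕ → ℝ)
    (hmono : Monotone ℓ)
    (hℓ : ∀ n : ℕ, 1 < n → Real.log n ≤ ℓ n ∧ ℓ n ≤ cbar * Real.sqrt (n / Real.log n)) :
    ∃ K > (0 : ℝ), ∀ᶠ n : ℕ in Filter.atTop,
      (∫ ω, ((n : ℝ) - (U n ω : ℝ)) ∂(gMeasure n (ℓ n))) ≤
        K * n / (Real.log (Real.log n)) ^ (3/2 : ℝ) := by
  refine ⟨6125, by norm_num, ?_⟩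
  have hlog : Filter.Tendsto (fun n : ℕ => Real.log n) Filter.atTop Filter.atTop :=
    Real.tendsto_log_atTop.comp tendsto_natCast_atTop_atTop
  have hloglog := Real.tendsto_log_atTop.comp hlog
  have hexp := (Real.tendsto_exp_div_pow_atTop 21).comp hloglog
  filter_upwards [Filter.eventually_gt_atTop 1, hlog.eventually_ge_atTop 1,
    hloglog.eventually_ge_atTop 2, hexp.eventually_ge_atTop (cbar ^ 2)] with n hn h1 h2 h3
  simp only [Function.comp_apply] at h2 h3
  rw [Real.exp_log (by linarith)] at h3
  obtain ⟨hlow, hup⟩ := hℓ n hn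
  set L := Real.log (Real.log n) with hL
  have hL0 : 0 < L := by linarith
  have hn0 : (0 : ℝ) < n := by positivity
  set t := (L ^ (3 / 2 : ℝ))⁻¹ with ht
  have ht0 : 0 < t := by positivity
  have ht2 : t ≤ 1 / 2 := by
    rw [ht, one_div]
    refine inv_anti₀ (by norm_num) (h2.trans ?_)
    exact Real.self_le_rpow_of_one_le (by linarith) (by norm_num)
  have ht14 : t ^ 14 = (L ^ 21)⁻¹ := by
    rw [ht, inv_pow, ← Real.rpow_natCast, ← Real.rpow_mul hL0.le, ← Real.rpow_natCast]
    norm_num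
  have hℓ1 : 1 ≤ ℓ n := h1.trans hlow
  have hratio : ℓ n ^ 2 / n ≤ t ^ 14 := by
    have hsq : ℓ n ^ 2 ≤ cbar ^ 2 * (n / Real.log n) := by
      calc ℓ n ^ 2 ≤ (cbar * Real.sqrt (n / Real.log n)) ^ 2 := by gcongr
        _ = _ := by rw [mul_pow, Real.sq_sqrt (by positivity)]
    rw [div_le_iff₀ hn0]
    refine hsq.trans ?_
    rw [le_div_iff₀ (by positivity)] at h3
    rw [ht14, inv_mul_eq_div, ← mul_div_assoc, div_le_div_iff₀ (by linarith) (by positivity)]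
    nlinarith
  set ε := (t * ℓ n ^ 2 / n) ^ ((3 : ℕ) : ℝ)⁻¹ with hεdef
  have hε0 : 0 < ε := by positivity
  have hε3 : ε ^ 3 = t * ℓ n ^ 2 / n := Real.rpow_inv_natCast_pow (by positivity) (by norm_num)
  have hεt : ε ≤ t ^ 5 := by
    refine le_of_pow_le_pow_left₀ three_ne_zero (by positivity) ?_
    rw [hε3, mul_div_assoc]
    calc t * (ℓ n ^ 2 / n) ≤ t * t ^ 14 := by gcongr
      _ = (t ^ 5) ^ 3 := by ring
  refine (integral_sub_U_le hℓ1 ht0 ht2 hε0 hεt (by rw [hε3]; field_simp)).trans (le_of_eq ?_)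
  rw [ht]
  ring
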